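/- arXiv:2102.07091 — 2 statements merged into one kernel-verified Lean document; each statement's English description precedes it below -/
import Mathlib

section
/- Let r ≤ d, let f : ℝ^{d×r} → ℝ be differentiable with gradient ∇f, assume ∇f is L-Lipschitz on ℝ^{d×r} with respect to the Frobenius norm, and assume ‖∇f(z)‖₂ ≤ L_n for every z with zᵀz = I_r. For x with xᵀx = I_r define grad f(x) := ∇f(x) − (1/2)x(xᵀ∇f(x) + ∇f(x)ᵀx). Then for all x, y with xᵀx = I_r and yᵀy = I_r: ‖grad f(x) − grad f(y)‖_F ≤ (L + 2 L_n) ‖x − y‖_F. -/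
open Matrix

attribute [local instance] Matrix.normedAddCommGroup Matrix.normedSpace

/-- Frobenius norm of a real matrix. -/
noncomputable def frobNorm {m n : ℕ} (A : Matrix (Fin m) (Fin n) ℝ) : ℝ :=
  Real.sqrt (∑ i, ∑ j, (A i j) ^ 2)

/-- Spectral (operator) norm of a real matrix. -/
noncomputable def specNorm {m n : ℕ} (A : Matrix (Fin m) (Fin n) ℝ) : ℝ :=
  ‖LinearMap.toContinuousLinearMap (Matrix.toEuclideanLin A)‖

/-- Frobenius inner product `⟨A, B⟩ = trace (AᵀB)` of real matrices. -/
noncomputable def finner {m n : ℕ} (A B : Matrix (Fin m) (Fin n) ℝ) : ℝ :=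
  (Aᵀ * B).trace

/-!
On `St(d,r)` the Riemannian gradient is `P_x (∇f x)`, where `P_x` is the orthogonal projection onto
the tangent space at `x`. Split `P_x A - P_y B = P_x (A - B) + (P_x B - P_y B)`. The first term is
at most `‖A - B‖_F` because `P_x` is an orthogonal projection. In the second, the formula
`P_x B = B - (1/2) x (xᵀ B + Bᵀ x)` is quadratic in `x`, and telescoping the products bounds it by
`(‖x‖₂ + ‖y‖₂) ‖B‖₂ ‖x - y‖_F`, where `‖x‖₂, ‖y‖₂ ≤ 1`.
-/

section

variable {m n p d r : ℕ}

/-- `‖A‖` would elaborate to the entrywise sup norm, the local instance, hence the explicit one. -/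
lemma specNorm_eq_l2_opNorm (A : Matrix (Fin m) (Fin n) ℝ) :
    specNorm A = instL2OpNormedAddCommGroup.toNorm.norm A := rfl

lemma specNorm_nonneg (A : Matrix (Fin m) (Fin n) ℝ) : 0 ≤ specNorm A := norm_nonneg _

lemma specNorm_transpose (A : Matrix (Fin m) (Fin n) ℝ) : specNorm Aᵀ = specNorm A := by
  rw [← conjTranspose_eq_transpose_of_trivial, specNorm_eq_l2_opNorm, l2_opNorm_conjTranspose,
    specNorm_eq_l2_opNorm]

lemma specNorm_add_le (A B : Matrix (Fin m) (Fin n) ℝ) :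
    specNorm (A + B) ≤ specNorm A + specNorm B :=
  letI := instL2OpNormedAddCommGroup (𝕜 := ℝ) (m := Fin m) (n := Fin n)
  norm_add_le A B

lemma specNorm_mul_le (A : Matrix (Fin m) (Fin n) ℝ) (B : Matrix (Fin n) (Fin p) ℝ) :
    specNorm (A * B) ≤ specNorm A * specNorm B :=
  l2_opNorm_mul A B

lemma specNorm_one_le_one : specNorm (1 : Matrix (Fin n) (Fin n) ℝ) ≤ 1 :=
  ContinuousLinearMap.opNorm_le_bound _ zero_le_one fun v => by simp

lemma specNorm_le_one_of_transpose_mul_self {A : Matrix (Fin m) (Fin n) ℝ} (hA : Aᵀ * A = 1) :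
    specNorm A ≤ 1 := by
  have hsq : specNorm (Aᵀ * A) = specNorm A * specNorm A := by
    rw [← conjTranspose_eq_transpose_of_trivial]
    exact l2_opNorm_conjTranspose_mul_self A
  rw [hA] at hsq
  refine le_of_sq_le_sq ?_ zero_le_one
  rw [sq, one_pow, ← hsq]
  exact specNorm_one_le_one

lemma frobNorm_eq_frobenius_norm (A : Matrix (Fin m) (Fin n) ℝ) :
    frobNorm A = frobeniusNormedAddCommGroup.toNorm.norm A := by
  simp [frobNorm, frobenius_norm_def, Real.sqrt_eq_rpow]

lemma frobNorm_nonneg (A : Matrix (Fin m) (Fin n) ℝ) : 0 ≤ frobNorm A := Real.sqrt_nonneg _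

lemma frobNorm_transpose (A : Matrix (Fin m) (Fin n) ℝ) : frobNorm Aᵀ = frobNorm A := by
  simp only [frobNorm_eq_frobenius_norm, frobenius_norm_transpose]

lemma frobNorm_add_le (A B : Matrix (Fin m) (Fin n) ℝ) :
    frobNorm (A + B) ≤ frobNorm A + frobNorm B := by
  simp only [frobNorm_eq_frobenius_norm]
  let := frobeniusNormedAddCommGroup (m := Fin m) (n := Fin n) (α := ℝ)
  exact norm_add_le A B

lemma frobNorm_smul (c : ℝ) (A : Matrix (Fin m) (Fin n) ℝ) :
    frobNorm (c • A) = |c| * frobNorm A := by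
  simp only [frobNorm_eq_frobenius_norm]
  let := frobeniusNormedAddCommGroup (m := Fin m) (n := Fin n) (α := ℝ)
  let := frobeniusNormedSpace (m := Fin m) (n := Fin n) (α := ℝ) (R := ℝ)
  exact norm_smul c A

lemma frobNorm_sq_eq_sum_col (A : Matrix (Fin m) (Fin n) ℝ) :
    frobNorm A ^ 2 = ∑ j, ‖WithLp.toLp 2 (A.col j)‖ ^ 2 := by
  rw [frobNorm, Real.sq_sqrt (by positivity), Finset.sum_comm]
  simp only [EuclideanSpace.norm_sq_eq, Real.norm_eq_abs, sq_abs, col_apply]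

lemma frobNorm_mul_le_specNorm_mul (A : Matrix (Fin m) (Fin n) ℝ)
    (B : Matrix (Fin n) (Fin p) ℝ) : frobNorm (A * B) ≤ specNorm A * frobNorm B := by
  refine le_of_sq_le_sq ?_ (mul_nonneg (specNorm_nonneg A) (frobNorm_nonneg B))
  have hcol (j : Fin p) : ‖WithLp.toLp 2 ((A * B).col j)‖ ≤
      specNorm A * ‖WithLp.toLp 2 (B.col j)‖ :=
    l2_opNorm_mulVec A (WithLp.toLp 2 (B.col j))
  calc frobNorm (A * B) ^ 2
      = ∑ j, ‖WithLp.toLp 2 ((A * B).col j)‖ ^ 2 := frobNorm_sq_eq_sum_col _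
    _ ≤ ∑ j, (specNorm A * ‖WithLp.toLp 2 (B.col j)‖) ^ 2 := by gcongr with j; exact hcol j
    _ = (specNorm A * frobNorm B) ^ 2 := by
        simp only [mul_pow, frobNorm_sq_eq_sum_col B, Finset.mul_sum]

lemma frobNorm_mul_le_mul_specNorm (A : Matrix (Fin m) (Fin n) ℝ)
    (B : Matrix (Fin n) (Fin p) ℝ) : frobNorm (A * B) ≤ frobNorm A * specNorm B := by
  rw [← frobNorm_transpose, transpose_mul, ← frobNorm_transpose A, ← specNorm_transpose B,
    mul_comm (frobNorm _)]
  exact frobNorm_mul_le_specNorm_mul Bᵀ Aᵀ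

lemma frobNorm_mul_sub_mul_le (A A' : Matrix (Fin m) (Fin n) ℝ) (B B' : Matrix (Fin n) (Fin p) ℝ) :
    frobNorm (A * B - A' * B') ≤
      specNorm A * frobNorm (B - B') + frobNorm (A - A') * specNorm B' := by
  have htelescope : A * B - A' * B' = A * (B - B') + (A - A') * B' := by
    rw [Matrix.mul_sub, Matrix.sub_mul, sub_add_sub_cancel]
  rw [htelescope]
  exact (frobNorm_add_le _ _).trans
    (add_le_add (frobNorm_mul_le_specNorm_mul _ _) (frobNorm_mul_le_mul_specNorm _ _))

lemma frobNorm_sq_eq_finner (A : Matrix (Fin m) (Fin n) ℝ) : frobNorm A ^ 2 = finner A A := by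
  rw [frobNorm, Real.sq_sqrt (by positivity), Finset.sum_comm]
  simp only [finner, trace, diag_apply, mul_apply, transpose_apply, sq]

lemma finner_comm (A B : Matrix (Fin m) (Fin n) ℝ) : finner A B = finner B A := by
  rw [finner, ← trace_transpose, transpose_mul, transpose_transpose, finner]

lemma finner_transpose (A B : Matrix (Fin m) (Fin n) ℝ) : finner Aᵀ Bᵀ = finner A B := by
  rw [finner_comm A B]
  simp only [finner, transpose_transpose]
  exact trace_mul_comm A Bᵀ

lemma finner_mul_right (A : Matrix (Fin m) (Fin n) ℝ) (B : Matrix (Fin m) (Fin p) ℝ)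
    (C : Matrix (Fin n) (Fin p) ℝ) : finner B (A * C) = finner (Aᵀ * B) C := by
  simp only [finner, transpose_mul, transpose_transpose, Matrix.mul_assoc]

lemma finner_add_left (A B C : Matrix (Fin m) (Fin n) ℝ) :
    finner (A + B) C = finner A C + finner B C := by
  simp only [finner, transpose_add, Matrix.add_mul, trace_add]

lemma finner_smul_right (c : ℝ) (A B : Matrix (Fin m) (Fin n) ℝ) :
    finner A (c • B) = c * finner A B := by
  simp only [finner, Matrix.mul_smul, trace_smul, smul_eq_mul]

lemma frobNorm_sub_sq (A B : Matrix (Fin m) (Fin n) ℝ) :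
    frobNorm (A - B) ^ 2 = frobNorm A ^ 2 - 2 * finner A B + frobNorm B ^ 2 := by
  have hexpand : finner (A - B) (A - B) =
      finner A A - finner A B - (finner B A - finner B B) := by
    simp only [finner, transpose_sub, Matrix.sub_mul, Matrix.mul_sub, trace_sub]
    ring
  rw [frobNorm_sq_eq_finner, hexpand, finner_comm B A, frobNorm_sq_eq_finner,
    frobNorm_sq_eq_finner]
  ring

lemma frobNorm_mul_of_transpose_mul_self {A : Matrix (Fin m) (Fin n) ℝ} (hA : Aᵀ * A = 1)
    (B : Matrix (Fin n) (Fin p) ℝ) : frobNorm (A * B) = frobNorm B := by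
  rw [← sq_eq_sq₀ (frobNorm_nonneg _) (frobNorm_nonneg _), frobNorm_sq_eq_finner,
    finner_mul_right, ← Matrix.mul_assoc, hA, Matrix.one_mul, frobNorm_sq_eq_finner]

lemma finner_self_add_transpose (A : Matrix (Fin n) (Fin n) ℝ) :
    2 * finner A (A + Aᵀ) = frobNorm (A + Aᵀ) ^ 2 := by
  have hsymm : finner Aᵀ (A + Aᵀ) = finner A (A + Aᵀ) := by
    rw [← finner_transpose A, transpose_add, transpose_transpose, add_comm Aᵀ]
  rw [frobNorm_sq_eq_finner, finner_add_left, hsymm, two_mul]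

/-- The orthogonal projection, for the Frobenius inner product, of `M` onto the tangent space
`{v | xᵀ v + vᵀ x = 0}` of the Stiefel manifold at `x`; the Riemannian gradient is the projection of
the Euclidean one. The formula gives the projection when `xᵀ x = 1`, and is taken as the definition
for every other `x`. -/
noncomputable def stiefelTangentProj (x M : Matrix (Fin d) (Fin r) ℝ) : Matrix (Fin d) (Fin r) ℝ :=
  M - (1 / 2 : ℝ) • (x * (xᵀ * M + Mᵀ * x))

lemma stiefelTangentProj_sub (x M N : Matrix (Fin d) (Fin r) ℝ) :
    stiefelTangentProj x (M - N) = stiefelTangentProj x M - stiefelTangentProj x N := by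
  simp only [stiefelTangentProj, transpose_sub, Matrix.sub_mul, Matrix.mul_sub, Matrix.mul_add]
  module

lemma frobNorm_sq_stiefelTangentProj {x : Matrix (Fin d) (Fin r) ℝ} (hx : xᵀ * x = 1)
    (M : Matrix (Fin d) (Fin r) ℝ) :
    frobNorm (stiefelTangentProj x M) ^ 2 =
      frobNorm M ^ 2 - 1 / 4 * frobNorm (xᵀ * M + Mᵀ * x) ^ 2 := by
  have hinner : 2 * finner (xᵀ * M) (xᵀ * M + Mᵀ * x) = frobNorm (xᵀ * M + Mᵀ * x) ^ 2 := by
    simpa only [transpose_mul, transpose_transpose] using finner_self_add_transpose (xᵀ * M)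
  rw [stiefelTangentProj, frobNorm_sub_sq, finner_smul_right, finner_mul_right, frobNorm_smul,
    mul_pow, frobNorm_mul_of_transpose_mul_self hx, sq_abs]
  linear_combination (-1 / 2) * hinner

lemma frobNorm_stiefelTangentProj_le {x : Matrix (Fin d) (Fin r) ℝ} (hx : xᵀ * x = 1)
    (M : Matrix (Fin d) (Fin r) ℝ) : frobNorm (stiefelTangentProj x M) ≤ frobNorm M := by
  refine le_of_sq_le_sq ?_ (frobNorm_nonneg M)
  rw [frobNorm_sq_stiefelTangentProj hx]
  exact sub_le_self _ (by positivity)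

lemma specNorm_transpose_mul_add_le (x M : Matrix (Fin d) (Fin r) ℝ) :
    specNorm (xᵀ * M + Mᵀ * x) ≤ 2 * (specNorm x * specNorm M) := by
  have hleft := specNorm_mul_le xᵀ M
  have hright := specNorm_mul_le Mᵀ x
  rw [specNorm_transpose] at hleft hright
  linarith [specNorm_add_le (xᵀ * M) (Mᵀ * x)]

lemma frobNorm_transpose_mul_add_le (x M : Matrix (Fin d) (Fin r) ℝ) :
    frobNorm (xᵀ * M + Mᵀ * x) ≤ 2 * (frobNorm x * specNorm M) := by
  have hleft := frobNorm_mul_le_mul_specNorm xᵀ M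
  have hright := frobNorm_mul_le_specNorm_mul Mᵀ x
  rw [frobNorm_transpose] at hleft
  rw [specNorm_transpose] at hright
  linarith [frobNorm_add_le (xᵀ * M) (Mᵀ * x)]

lemma frobNorm_stiefelTangentProj_sub_le (x y M : Matrix (Fin d) (Fin r) ℝ) :
    frobNorm (stiefelTangentProj x M - stiefelTangentProj y M) ≤
      (specNorm x + specNorm y) * specNorm M * frobNorm (x - y) := by
  have hdiff : stiefelTangentProj x M - stiefelTangentProj y M =
      (-1 / 2 : ℝ) • (x * (xᵀ * M + Mᵀ * x) - y * (yᵀ * M + Mᵀ * y)) := by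
    simp only [stiefelTangentProj]
    module
  have hsub : (xᵀ * M + Mᵀ * x) - (yᵀ * M + Mᵀ * y) = (x - y)ᵀ * M + Mᵀ * (x - y) := by
    rw [transpose_sub, Matrix.sub_mul, Matrix.mul_sub, add_sub_add_comm]
  calc frobNorm (stiefelTangentProj x M - stiefelTangentProj y M)
      = 1 / 2 * frobNorm (x * (xᵀ * M + Mᵀ * x) - y * (yᵀ * M + Mᵀ * y)) := by
        rw [hdiff, frobNorm_smul]
        norm_num
    _ ≤ 1 / 2 * (specNorm x * frobNorm ((x - y)ᵀ * M + Mᵀ * (x - y)) +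
          frobNorm (x - y) * specNorm (yᵀ * M + Mᵀ * y)) := by
        rw [← hsub]
        gcongr
        exact frobNorm_mul_sub_mul_le _ _ _ _
    _ ≤ 1 / 2 * (specNorm x * (2 * (frobNorm (x - y) * specNorm M)) +
          frobNorm (x - y) * (2 * (specNorm y * specNorm M))) := by
        gcongr
        · exact specNorm_nonneg x
        · exact frobNorm_transpose_mul_add_le _ _
        · exact frobNorm_nonneg _
        · exact specNorm_transpose_mul_add_le _ _
    _ = (specNorm x + specNorm y) * specNorm M * frobNorm (x - y) := by ring

lemma frobNorm_stiefelTangentProj_sub_stiefelTangentProj_le {x y : Matrix (Fin d) (Fin r) ℝ}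
    (hx : xᵀ * x = 1) (hy : yᵀ * y = 1) (A B : Matrix (Fin d) (Fin r) ℝ) :
    frobNorm (stiefelTangentProj x A - stiefelTangentProj y B) ≤
      frobNorm (A - B) + 2 * specNorm B * frobNorm (x - y) := by
  have hspec : specNorm x + specNorm y ≤ 2 := by
    linarith [specNorm_le_one_of_transpose_mul_self hx, specNorm_le_one_of_transpose_mul_self hy]
  calc frobNorm (stiefelTangentProj x A - stiefelTangentProj y B)
      = frobNorm (stiefelTangentProj x (A - B) +
          (stiefelTangentProj x B - stiefelTangentProj y B)) := by
        rw [stiefelTangentProj_sub, sub_add_sub_cancel]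
    _ ≤ frobNorm (stiefelTangentProj x (A - B)) +
          frobNorm (stiefelTangentProj x B - stiefelTangentProj y B) := frobNorm_add_le _ _
    _ ≤ frobNorm (A - B) + (specNorm x + specNorm y) * specNorm B * frobNorm (x - y) :=
        add_le_add (frobNorm_stiefelTangentProj_le hx _) (frobNorm_stiefelTangentProj_sub_le x y B)
    _ ≤ frobNorm (A - B) + 2 * specNorm B * frobNorm (x - y) := by
        gcongr
        · exact frobNorm_nonneg _
        · exact specNorm_nonneg B

theorem riemannian_gradient_lipschitz_general {L Ln : ℝ}
    {G : Matrix (Fin d) (Fin r) ℝ → Matrix (Fin d) (Fin r) ℝ}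
    (hLip : ∀ x y, xᵀ * x = 1 → yᵀ * y = 1 → frobNorm (G x - G y) ≤ L * frobNorm (x - y))
    (hbound : ∀ z, zᵀ * z = 1 → specNorm (G z) ≤ Ln) (x y : Matrix (Fin d) (Fin r) ℝ)
    (hx : xᵀ * x = 1) (hy : yᵀ * y = 1) :
    frobNorm (stiefelTangentProj x (G x) - stiefelTangentProj y (G y)) ≤
      (L + 2 * Ln) * frobNorm (x - y) :=
  calc frobNorm (stiefelTangentProj x (G x) - stiefelTangentProj y (G y))
      ≤ frobNorm (G x - G y) + 2 * specNorm (G y) * frobNorm (x - y) :=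
        frobNorm_stiefelTangentProj_sub_stiefelTangentProj_le hx hy _ _
    _ ≤ L * frobNorm (x - y) + 2 * Ln * frobNorm (x - y) := by
        gcongr
        · exact hLip x y hx hy
        · exact frobNorm_nonneg _
        · exact hbound y hy
    _ = (L + 2 * Ln) * frobNorm (x - y) := by ring

end

/-- **Lipschitz continuity of the Riemannian gradient on the Stiefel manifold.**
If `f` is differentiable with gradient `Df`, `Df` is `L`-Lipschitz in Frobenius norm on
`ℝ^{d×r}` and `‖Df z‖₂ ≤ Ln` on `St(d,r)`, then with
`grad f x = Df x − (1/2)x(xᵀ Df x + (Df x)ᵀ x)` one has, for all `x, y ∈ St(d,r)`,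
`‖grad f x − grad f y‖_F ≤ (L + 2 Ln)‖x − y‖_F`. -/
theorem riemannian_gradient_lipschitz
    (d r : ℕ) (hdr : r ≤ d) (L Ln : ℝ)
    (f : Matrix (Fin d) (Fin r) ℝ → ℝ) (Df : Matrix (Fin d) (Fin r) ℝ → Matrix (Fin d) (Fin r) ℝ)
    (hdiff : Differentiable ℝ f)
    (hgrad : ∀ z h, fderiv ℝ f z h = finner (Df z) h)
    (hLip : ∀ a b, frobNorm (Df a - Df b) ≤ L * frobNorm (a - b))
    (hbound : ∀ z : Matrix (Fin d) (Fin r) ℝ, zᵀ * z = 1 → specNorm (Df z) ≤ Ln) :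
    ∀ x y : Matrix (Fin d) (Fin r) ℝ, xᵀ * x = 1 → yᵀ * y = 1 →
      frobNorm ((Df x - (1 / 2 : ℝ) • (x * (xᵀ * Df x + (Df x)ᵀ * x))) -
          (Df y - (1 / 2 : ℝ) • (y * (yᵀ * Df y + (Df y)ᵀ * y)))) ≤
        (L + 2 * Ln) * frobNorm (x - y) := by
  exact riemannian_gradient_lipschitz_general (fun a b _ _ => hLip a b) hbound
end

section
/- Let r ≤ d, n ≥ 1, α ≥ 0, β ≥ 0 and ρ ≥ 0. Let x_1,…,x_n be real d×r matrices with x_iᵀx_i = I_r, and let g_1,…,g_n, v_1,…,v_n be real d×r matrices. Suppose: (i) x̄ is a real d×r matrix with x̄ᵀx̄ = I_r satisfying ∑_i ‖x_i − x̄‖_F² ≤ ∑_i ‖x_i − y‖_F² for every y with yᵀy = I_r (an induced arithmetic mean of x_1,…,x_n); (ii) the updated points x'_1,…,x'_n satisfy (x'_i)ᵀx'_i = I_r and the retraction nonexpansiveness bound ‖x'_i − y‖_F ≤ ‖x_i − α g_i + β v_i − y‖_F for every y with yᵀy = I_r; (iii) x̄' is an induced arithmetic mean of x'_1,…,x'_n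 in the sense of (i); and (iv) the consensus contraction ( ∑_i ‖x_i − α g_i − x̄‖_F² )^{1/2} ≤ ρ ( ∑_i ‖x_i − x̄‖_F² )^{1/2} holds. Then ( ∑_i ‖x'_i − x̄'‖_F² )^{1/2} ≤ ρ ( ∑_i ‖x_i − x̄‖_F² )^{1/2} + β ( ∑_i ‖v_i‖_F² )^{1/2}. -/
open Matrix

/-!
Replacing `x̄'` by `x̄` can only increase the error of the updated points, since `x̄'` minimizes it,
and nonexpansiveness of the retraction at `x̄` then passes from `x'_i` to `x_i - α g_i + β v_i`.
Minkowski's inequality in the `ℓ²`-sum of `n` copies of the matrix space separates the consensus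
part `x_i - α g_i - x̄`, controlled by the contraction, from the part `β v_i`.
-/

section SquareSums

variable {ι E : Type*} [Fintype ι] [SeminormedAddCommGroup E]

theorem sqrt_sum_sq_norm_add_le (u v : ι → E) :
    √(∑ i, ‖u i + v i‖ ^ 2) ≤ √(∑ i, ‖u i‖ ^ 2) + √(∑ i, ‖v i‖ ^ 2) := by
  simpa only [PiLp.norm_eq_of_L2, PiLp.add_apply] using
    norm_add_le (WithLp.toLp 2 u) (WithLp.toLp 2 v)

theorem sqrt_sum_sq_norm_smul_le {𝕜 : Type*} [SeminormedRing 𝕜] [Module 𝕜 E] [IsBoundedSMul 𝕜 E]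
    (c : 𝕜) (v : ι → E) :
    √(∑ i, ‖c • v i‖ ^ 2) ≤ ‖c‖ * √(∑ i, ‖v i‖ ^ 2) := by
  simpa only [PiLp.norm_eq_of_L2, PiLp.smul_apply] using norm_smul_le c (WithLp.toLp 2 v)

theorem sqrt_sum_sq_norm_sub_le_of_isMinOn {S : Set E} {p q : ι → E} {z z' : E} (hz : z ∈ S)
    (hmin : IsMinOn (fun y ↦ ∑ i, ‖p i - y‖ ^ 2) S z') (hpq : ∀ i, ‖p i - z‖ ≤ ‖q i - z‖) :
    √(∑ i, ‖p i - z'‖ ^ 2) ≤ √(∑ i, ‖q i - z‖ ^ 2) := by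
  refine Real.sqrt_le_sqrt ?_
  calc
    ∑ i, ‖p i - z'‖ ^ 2 ≤ ∑ i, ‖p i - z‖ ^ 2 := isMinOn_iff.1 hmin z hz
    _ ≤ ∑ i, ‖q i - z‖ ^ 2 := by
      gcongr with i
      exact hpq i

end SquareSums

theorem consensus_error_recursion_general
    {𝕜 ι E : Type*} [SeminormedRing 𝕜] [Fintype ι] [SeminormedAddCommGroup E] [Module 𝕜 E]
    [IsBoundedSMul 𝕜 E]
    {S : Set E} {α β : 𝕜} {ρ : ℝ} {x x' g v : ι → E} {xbar xbar' : E} (hxbar : xbar ∈ S)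
    (hretr : ∀ i, ∀ y ∈ S, ‖x' i - y‖ ≤ ‖x i - α • g i + β • v i - y‖)
    (hmin : IsMinOn (fun y ↦ ∑ i, ‖x' i - y‖ ^ 2) S xbar')
    (hcontr : √(∑ i, ‖x i - α • g i - xbar‖ ^ 2) ≤ ρ * √(∑ i, ‖x i - xbar‖ ^ 2)) :
    √(∑ i, ‖x' i - xbar'‖ ^ 2) ≤
      ρ * √(∑ i, ‖x i - xbar‖ ^ 2) + ‖β‖ * √(∑ i, ‖v i‖ ^ 2) :=
  calc
    √(∑ i, ‖x' i - xbar'‖ ^ 2) ≤ √(∑ i, ‖x i - α • g i + β • v i - xbar‖ ^ 2) :=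
      sqrt_sum_sq_norm_sub_le_of_isMinOn hxbar hmin fun i ↦ hretr i xbar hxbar
    _ = √(∑ i, ‖x i - α • g i - xbar + β • v i‖ ^ 2) := by
      simp only [sub_add_eq_add_sub]
    _ ≤ √(∑ i, ‖x i - α • g i - xbar‖ ^ 2) + √(∑ i, ‖β • v i‖ ^ 2) :=
      sqrt_sum_sq_norm_add_le _ _
    _ ≤ ρ * √(∑ i, ‖x i - xbar‖ ^ 2) + ‖β‖ * √(∑ i, ‖v i‖ ^ 2) :=
      add_le_add hcontr (sqrt_sum_sq_norm_smul_le β v)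

open scoped Matrix.Norms.Frobenius in
theorem frobNorm_eq_norm {m n : ℕ} (A : Matrix (Fin m) (Fin n) ℝ) : frobNorm A = ‖A‖ := by
  simp only [frobNorm, frobenius_norm_def, Real.sqrt_eq_rpow, Real.rpow_two, Real.norm_eq_abs,
    sq_abs]

/-- **Recursive consensus-error bound for retraction-based updates.**
If `x̄` is an induced arithmetic mean of the Stiefel points `x_i`, the updated Stiefel
points `x'_i` satisfy the retraction nonexpansiveness bound with respect to
`x_i − α g_i + β v_i`, `x̄'` is an induced arithmetic mean of the `x'_i`, and the
consensus step contracts with factor `ρ`, then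
`(∑_i ‖x'_i − x̄'‖_F²)^{1/2} ≤ ρ (∑_i ‖x_i − x̄‖_F²)^{1/2} + β (∑_i ‖v_i‖_F²)^{1/2}`. -/
theorem consensus_error_recursion
    (d r n : ℕ) (hdr : r ≤ d) (hn : 1 ≤ n) (α β ρ : ℝ)
    (hα : 0 ≤ α) (hβ : 0 ≤ β) (hρ : 0 ≤ ρ)
    (x x' g v : Fin n → Matrix (Fin d) (Fin r) ℝ)
    (xbar xbar' : Matrix (Fin d) (Fin r) ℝ)
    (hx : ∀ i, (x i)ᵀ * x i = 1)
    (hxbar : xbarᵀ * xbar = 1)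
    (hIAM : ∀ y : Matrix (Fin d) (Fin r) ℝ, yᵀ * y = 1 →
      ∑ i, (frobNorm (x i - xbar)) ^ 2 ≤ ∑ i, (frobNorm (x i - y)) ^ 2)
    (hx' : ∀ i, (x' i)ᵀ * x' i = 1)
    (hretr : ∀ i, ∀ y : Matrix (Fin d) (Fin r) ℝ, yᵀ * y = 1 →
      frobNorm (x' i - y) ≤ frobNorm (x i - α • g i + β • v i - y))
    (hxbar' : xbar'ᵀ * xbar' = 1)
    (hIAM' : ∀ y : Matrix (Fin d) (Fin r) ℝ, yᵀ * y = 1 →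
      ∑ i, (frobNorm (x' i - xbar')) ^ 2 ≤ ∑ i, (frobNorm (x' i - y)) ^ 2)
    (hcontr : Real.sqrt (∑ i, (frobNorm (x i - α • g i - xbar)) ^ 2) ≤
      ρ * Real.sqrt (∑ i, (frobNorm (x i - xbar)) ^ 2)) :
    Real.sqrt (∑ i, (frobNorm (x' i - xbar')) ^ 2) ≤
      ρ * Real.sqrt (∑ i, (frobNorm (x i - xbar)) ^ 2) +
        β * Real.sqrt (∑ i, (frobNorm (v i)) ^ 2) := by
  simp only [frobNorm_eq_norm] at hretr hIAM' hcontr ⊢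
  open scoped Matrix.Norms.Frobenius in
  simpa only [Real.norm_of_nonneg hβ] using
    consensus_error_recursion_general (S := {y | yᵀ * y = 1}) hxbar hretr
      (isMinOn_iff.2 hIAM') hcontr
end
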